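/- Let d ≥ 1 and let a : ℝ^d → ℝ be a positive-definite quadratic form, extended to ℂ^d as a complex-bilinear quadratic polynomial. For k ∈ {1,2} define p_k : ℂ^{1+d} → ℂ by p_k(σ,ξ) := (−1)^k i σ² + a(ξ). Then p_k satisfies the simple-characteristic property in every direction: for every M ∈ ℝ^{1+d} ∖ {0}, every ζ = (σ,ξ) ∈ ℝ^{1+d} and every θ ≥ 0, if p_k(ζ + iθM) = 0 and the derivative of the map t ↦ p_k(ζ + itM) vanishes at t = θ, then ζ = 0 and θ = 0. -/

import Mathlib

/-- For a positive-definite quadratic form `a` on `ℝ^d` (extended complex-bilinearly to `ℂ^d`),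
the symbols `p_k(σ,ξ) = (-1)^k i σ² + a(ξ)`, `k = 1, 2`, satisfy the simple-characteristic
property in every nonzero real direction. -/
theorem stmt2 (d : ℕ) (hd : 1 ≤ d)
    (A : Fin d → Fin d → ℝ)
    (hpos : ∃ c > 0, ∀ ξ : Fin d → ℝ,
      c * (∑ j, (ξ j) ^ 2) ≤ ∑ j, ∑ l, A j l * ξ j * ξ l)
    (k : ℕ) (hk : k = 1 ∨ k = 2)
    (p : ℂ → (Fin d → ℂ) → ℂ)
    (hp : ∀ (σ : ℂ) (ξ : Fin d → ℂ),
      p σ ξ = (-1 : ℂ) ^ k * Complex.I * σ ^ 2 + ∑ j, ∑ l, (A j l : ℂ) * ξ j * ξ l) :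
    ∀ (Mσ : ℝ) (Mξ : Fin d → ℝ), ¬ (Mσ = 0 ∧ Mξ = 0) →
      ∀ (σ : ℝ) (ξ : Fin d → ℝ) (θ : ℝ), 0 ≤ θ →
        p ((σ : ℂ) + (θ : ℂ) * Complex.I * (Mσ : ℂ))
          (fun j => (ξ j : ℂ) + (θ : ℂ) * Complex.I * (Mξ j : ℂ)) = 0 →
        deriv (fun t : ℝ =>
          p ((σ : ℂ) + (t : ℂ) * Complex.I * (Mσ : ℂ))
            (fun j => (ξ j : ℂ) + (t : ℂ) * Complex.I * (Mξ j : ℂ))) θ = 0 →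
        σ = 0 ∧ ξ = 0 ∧ θ = 0 := by
  obtain ⟨c, hc, hpos⟩ := hpos
  intro Mσ Mξ hM σ ξ θ hθ h0 h1
  obtain ⟨ε, hε, hεk⟩ : ∃ ε : ℝ, ε ^ 2 = 1 ∧ (-1 : ℂ) ^ k = (ε : ℂ) := by
    rcases hk with rfl | rfl
    · exact ⟨-1, by norm_num, by norm_num⟩
    · exact ⟨1, by norm_num, by norm_num⟩
  have hq : ∀ v : Fin d → ℝ, 0 ≤ ∑ j, ∑ l, A j l * v j * v l := fun v =>
    le_trans (mul_nonneg hc.le (Finset.sum_nonneg fun j _ => sq_nonneg (v j))) (hpos v)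
  have hq0 : ∀ v : Fin d → ℝ, ∑ j, ∑ l, A j l * v j * v l = 0 → v = 0 := by
    intro v hv
    have h2 := hpos v
    rw [hv] at h2
    have h3 : 0 ≤ ∑ j, v j ^ 2 := Finset.sum_nonneg fun j _ => sq_nonneg (v j)
    have h4 : ∑ j, v j ^ 2 = 0 := by nlinarith
    rw [Finset.sum_eq_zero_iff_of_nonneg (fun j _ => sq_nonneg (v j))] at h4
    funext j
    exact pow_eq_zero_iff (two_ne_zero) |>.1 (h4 j (Finset.mem_univ j))
  obtain ⟨a, ha⟩ : ∃ a, a = ∑ j, ∑ l, A j l * ξ j * ξ l := ⟨_, rfl⟩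
  obtain ⟨m, hm⟩ : ∃ m, m = ∑ j, ∑ l, A j l * Mξ j * Mξ l := ⟨_, rfl⟩
  obtain ⟨B, hB⟩ : ∃ B, B = ∑ j, ∑ l, A j l * (ξ j * Mξ l + Mξ j * ξ l) := ⟨_, rfl⟩
  have key : ∀ t : ℝ, p ((σ : ℂ) + (t : ℂ) * Complex.I * (Mσ : ℂ))
      (fun j => (ξ j : ℂ) + (t : ℂ) * Complex.I * (Mξ j : ℂ)) =
      ((-2 * ε * t * σ * Mσ + a - t ^ 2 * m : ℝ) : ℂ) +
      ((ε * (σ ^ 2 - t ^ 2 * Mσ ^ 2) + t * B : ℝ) : ℂ) * Complex.I := by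
    intro t
    have hsum : ∑ j, ∑ l, (A j l : ℂ) * ((ξ j : ℂ) + (t : ℂ) * Complex.I * (Mξ j : ℂ)) *
        ((ξ l : ℂ) + (t : ℂ) * Complex.I * (Mξ l : ℂ)) =
        (a : ℂ) + (t : ℂ) * Complex.I * B - (t : ℂ) ^ 2 * m := by
      rw [ha, hm, hB]
      push_cast
      simp only [Finset.mul_sum, ← Finset.sum_add_distrib, ← Finset.sum_sub_distrib]
      refine Finset.sum_congr rfl fun j _ => Finset.sum_congr rfl fun l _ => ?_
      linear_combination (A j l * Mξ j * Mξ l * (t : ℂ) ^ 2) * Complex.I_sq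
    rw [hp, hεk, hsum]
    push_cast
    linear_combination (2 * ε * t * σ * Mσ + ε * t ^ 2 * Mσ ^ 2 * Complex.I : ℂ) * Complex.I_sq
  simp only [key] at h0 h1
  have hR : HasDerivAt (fun t : ℝ => -2 * ε * t * σ * Mσ + a - t ^ 2 * m)
      (-2 * ε * σ * Mσ - 2 * θ * m) θ := by
    have := (((((hasDerivAt_id θ).const_mul (-2 * ε)).mul_const σ).mul_const Mσ).add_const a).sub
      (((hasDerivAt_id θ).pow 2).mul_const m)
    refine HasDerivAt.congr_deriv this ?_
    simp
  have hI : HasDerivAt (fun t : ℝ => ε * (σ ^ 2 - t ^ 2 * Mσ ^ 2) + t * B)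
      (-2 * ε * θ * Mσ ^ 2 + B) θ := by
    have := (((((hasDerivAt_id θ).pow 2).mul_const (Mσ ^ 2)).const_sub (σ ^ 2)).const_mul ε).add
      ((hasDerivAt_id θ).mul_const B)
    refine HasDerivAt.congr_deriv this ?_
    simp
    ring
  have hd := (hR.ofReal_comp.add (hI.ofReal_comp.mul_const Complex.I)).deriv
  have hd' := h1.symm.trans hd
  have e1 := congrArg Complex.re h0
  have e2 := congrArg Complex.im h0
  have e3 := congrArg Complex.re hd'
  have e4 := congrArg Complex.im hd'
  simp only [Complex.add_re, Complex.add_im, Complex.re_ofReal_mul, Complex.im_ofReal_mul,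
    Complex.ofReal_re, Complex.ofReal_im, Complex.I_re, Complex.I_im, Complex.zero_re,
    Complex.zero_im, mul_zero, mul_one, add_zero, zero_add] at e1 e2 e3 e4
  have ha0 : 0 ≤ a := ha ▸ hq ξ
  have hm0 : 0 ≤ m := hm ▸ hq Mξ
  have f1 : a + θ ^ 2 * m = 0 := by linear_combination e1 + θ * e3
  have f2 : σ ^ 2 + (θ * Mσ) ^ 2 = 0 := by
    linear_combination ε * e2 + ε * θ * e4 - (σ ^ 2 + θ ^ 2 * Mσ ^ 2) * hε
  have g1 : 0 ≤ θ ^ 2 * m := by positivity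
  have hσ : σ = 0 := by nlinarith [sq_nonneg σ, sq_nonneg (θ * Mσ)]
  have hθM : θ * Mσ = 0 := by nlinarith [sq_nonneg σ, sq_nonneg (θ * Mσ)]
  have hξ : ξ = 0 := hq0 ξ (by linarith)
  refine ⟨hσ, hξ, ?_⟩
  by_contra hne
  apply hM
  refine ⟨(mul_eq_zero.1 hθM).resolve_left hne, hq0 Mξ ?_⟩
  have : θ ^ 2 * m = 0 := by linarith
  rw [← hm]
  exact (mul_eq_zero.1 this).resolve_left (pow_ne_zero 2 hne)
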